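/- arXiv:2407.13552 — 3 statements merged into one kernel-verified Lean document; each statement's English description precedes it below -/
import Mathlib

section
/- Each of the functions a₁₁, a₁₂, a₂₂ is real-valued, strictly increasing, and strictly positive on the interval (−∞, 0). -/
/-!
For a continuous weight `w ≥ 0` with `w (0, π/2) > 0`, the function `z ↦ ∫ w / (E₀ - z)` is positive
and strictly increasing on `(-∞, 0)`: the integrand is continuous, nonnegative and pointwise
increasing in `z`, strictly at the interior point `(0, π/2)` (`weighted_pos`,
`weighted_strictMono`). This settles `a₁₁` and `a₂₂`.

The numerator of `a₁₂` changes sign. With `s = cos p₁ + cos p₂` it equals `2 (cos p₁ - cos p₂)² s`,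
and `E₀ - z = (4 - z) - 2 s`, so
`s / (E₀ - z) = (1 / (4 - z)) (s + 2 s² / (E₀ - z))`.
The term `(cos p₁ - cos p₂)² s` integrates to zero over the square (`integral_odd_part`), being a
combination of products of cosine powers of odd total degree. Hence, up to `1 / (8 π²)`, `a₁₂ z` is
`1 / (4 - z)`, positive and increasing, times an integral with the nonnegative weight
`4 (cos p₁ - cos p₂)² s²`.
-/

open Real MeasureTheory Filter Topology

/-- The square `[-π,π]²` in `ℝ × ℝ`. -/
noncomputable def box : Set (ℝ × ℝ) := Set.Icc (-π, -π) (π, π)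

/-- The dispersion relation `E₀(p) = 2((1 - cos p₁) + (1 - cos p₂))`. -/
noncomputable def E0 (p : ℝ × ℝ) : ℝ := 2 * ((1 - cos p.1) + (1 - cos p.2))

/-- `a₁₁(z) = (1/(8π²)) ∫_{[-π,π]²} (cos p₁ - cos p₂)² / (E₀(p) - z) dp`. -/
noncomputable def a11 (z : ℝ) : ℝ :=
  (1 / (8 * π ^ 2)) * ∫ p in box, (cos p.1 - cos p.2) ^ 2 / (E0 p - z)

/-- `a₁₂(z) = (1/(8π²)) ∫_{[-π,π]²} (cos p₁ - cos p₂)(cos 2p₁ - cos 2p₂) / (E₀(p) - z) dp`. -/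
noncomputable def a12 (z : ℝ) : ℝ :=
  (1 / (8 * π ^ 2)) *
    ∫ p in box, (cos p.1 - cos p.2) * (cos (2 * p.1) - cos (2 * p.2)) / (E0 p - z)

/-- `a₂₂(z) = (1/(8π²)) ∫_{[-π,π]²} (cos 2p₁ - cos 2p₂)² / (E₀(p) - z) dp`. -/
noncomputable def a22 (z : ℝ) : ℝ :=
  (1 / (8 * π ^ 2)) * ∫ p in box, (cos (2 * p.1) - cos (2 * p.2)) ^ 2 / (E0 p - z)

lemma E0_sub_pos {z : ℝ} (hz : z < 0) (p : ℝ × ℝ) : 0 < E0 p - z := by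
  unfold E0
  linarith [cos_le_one p.1, cos_le_one p.2]

lemma continuous_E0 : Continuous E0 := by
  unfold E0
  fun_prop

lemma continuous_weighted {w : ℝ × ℝ → ℝ} (hw : Continuous w) {z : ℝ} (hz : z < 0) :
    Continuous fun p => w p / (E0 p - z) :=
  hw.div (continuous_E0.sub continuous_const) fun p => (E0_sub_pos hz p).ne'

lemma integrableOn_box {f : ℝ × ℝ → ℝ} (hf : Continuous f) : IntegrableOn f box :=
  hf.continuousOn.integrableOn_compact isCompact_Icc

/-- `(0, π/2)` is an interior point of the box, so positivity there spreads to a set of positive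
measure. -/
lemma integral_box_pos {f : ℝ × ℝ → ℝ} (hf : Continuous f) (h0 : ∀ p, 0 ≤ f p)
    (hq : 0 < f (0, π / 2)) : 0 < ∫ p in box, f p := by
  rw [setIntegral_pos_iff_support_of_nonneg_ae (Eventually.of_forall h0) (integrableOn_box hf)]
  have hsub : Set.Ioo (-π) π ×ˢ Set.Ioo (-π) π ⊆ box := by
    rintro ⟨x, y⟩ ⟨hx, hy⟩
    exact ⟨⟨hx.1.le, hy.1.le⟩, ⟨hx.2.le, hy.2.le⟩⟩
  refine lt_of_lt_of_le ?_ (measure_mono (Set.inter_subset_inter_right _ hsub))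
  refine (hf.isOpen_support.inter (isOpen_Ioo.prod isOpen_Ioo)).measure_pos _
    ⟨(0, π / 2), hq.ne', ?_, ?_⟩
  · constructor <;> simp [pi_pos]
  · constructor <;> simp only <;> linarith [pi_pos]

lemma weighted_pos {w : ℝ × ℝ → ℝ} (hw : Continuous w) (h0 : ∀ p, 0 ≤ w p)
    (hq : 0 < w (0, π / 2)) {z : ℝ} (hz : z < 0) : 0 < ∫ p in box, w p / (E0 p - z) :=
  integral_box_pos (continuous_weighted hw hz)
    (fun p => div_nonneg (h0 p) (E0_sub_pos hz p).le) (div_pos hq (E0_sub_pos hz _))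

lemma weighted_strictMono {w : ℝ × ℝ → ℝ} (hw : Continuous w) (h0 : ∀ p, 0 ≤ w p)
    (hq : 0 < w (0, π / 2)) {y z : ℝ} (hz : z < 0) (hyz : y < z) :
    ∫ p in box, w p / (E0 p - y) < ∫ p in box, w p / (E0 p - z) := by
  have hy : y < 0 := hyz.trans hz
  rw [← sub_pos, ← integral_sub (integrableOn_box (continuous_weighted hw hz))
    (integrableOn_box (continuous_weighted hw hy))]
  refine integral_box_pos ((continuous_weighted hw hz).sub (continuous_weighted hw hy)) ?_ ?_
  · intro p
    exact sub_nonneg.2 (div_le_div_of_nonneg_left (h0 p) (E0_sub_pos hz p) (by linarith))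
  · exact sub_pos.2 (div_lt_div_of_pos_left hq (E0_sub_pos hz _) (by linarith))

lemma integral_box_mul (f g : ℝ → ℝ) :
    ∫ p in box, f p.1 * g p.2 = (∫ x in -π..π, f x) * ∫ y in -π..π, g y := by
  have hle : -π ≤ π := by linarith [pi_pos]
  rw [intervalIntegral.integral_of_le hle, intervalIntegral.integral_of_le hle,
    ← integral_Icc_eq_integral_Ioc, ← integral_Icc_eq_integral_Ioc, ← setIntegral_prod_mul,
    Set.Icc_prod_Icc]
  rfl

lemma integral_cos_zero : ∫ x in -π..π, cos x = 0 := by simp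

lemma integral_cos_cube_zero : ∫ x in -π..π, cos x ^ 3 = 0 := by
  simp [integral_cos_pow_three]

lemma integral_odd_part :
    ∫ p in box, (cos p.1 - cos p.2) ^ 2 * (cos p.1 + cos p.2) = 0 := by
  have h1 := integral_box_mul (fun x => cos x ^ 3) (fun _ => 1)
  have h2 := integral_box_mul (fun x => cos x ^ 2) (fun y => cos y)
  have h3 := integral_box_mul (fun x => cos x) (fun y => cos y ^ 2)
  have h4 := integral_box_mul (fun _ => 1) (fun y => cos y ^ 3)
  simp only [integral_cos_zero, integral_cos_cube_zero, zero_mul, mul_zero] at h1 h2 h3 h4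
  have e : ∀ p : ℝ × ℝ, (cos p.1 - cos p.2) ^ 2 * (cos p.1 + cos p.2)
      = (cos p.1 ^ 3 * 1 - cos p.1 ^ 2 * cos p.2) - (cos p.1 * cos p.2 ^ 2 - 1 * cos p.2 ^ 3) :=
    fun p => by ring
  simp_rw [e]
  rw [integral_sub, integral_sub, integral_sub, h1, h2, h3, h4]
  · simp
  all_goals exact integrableOn_box (by fun_prop)

/-- The sign-definite weight that replaces the numerator of `a12`. -/
noncomputable def w12 (p : ℝ × ℝ) : ℝ :=
  4 * (cos p.1 - cos p.2) ^ 2 * (cos p.1 + cos p.2) ^ 2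

lemma continuous_w12 : Continuous w12 := by
  unfold w12
  fun_prop

lemma a12_eq {z : ℝ} (hz : z < 0) :
    a12 z = (1 / (8 * π ^ 2)) * ((1 / (4 - z)) * ∫ p in box, w12 p / (E0 p - z)) := by
  have e : ∀ p : ℝ × ℝ,
      (cos p.1 - cos p.2) * (cos (2 * p.1) - cos (2 * p.2)) / (E0 p - z)
      = (2 / (4 - z)) * ((cos p.1 - cos p.2) ^ 2 * (cos p.1 + cos p.2))
        + (1 / (4 - z)) * (w12 p / (E0 p - z)) := by
    intro p
    have hA : 4 - z ≠ 0 := by linarith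
    have hE := (E0_sub_pos hz p).ne'
    rw [cos_two_mul, cos_two_mul]
    field_simp
    unfold w12 E0
    ring
  unfold a12
  simp_rw [e]
  rw [integral_add, integral_const_mul, integral_const_mul, integral_odd_part]
  · ring
  · exact integrableOn_box (by fun_prop)
  · exact integrableOn_box (continuous_const.mul (continuous_weighted continuous_w12 hz))

/-- Each of `a₁₁, a₁₂, a₂₂` is strictly increasing and strictly positive on `(-∞, 0)`. -/
theorem aij_strictMono_pos_on_Iio_zero :
    (StrictMonoOn a11 (Set.Iio 0) ∧ ∀ z : ℝ, z < 0 → 0 < a11 z) ∧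
    (StrictMonoOn a12 (Set.Iio 0) ∧ ∀ z : ℝ, z < 0 → 0 < a12 z) ∧
    (StrictMonoOn a22 (Set.Iio 0) ∧ ∀ z : ℝ, z < 0 → 0 < a22 z) := by
  have hc : 0 < 1 / (8 * π ^ 2) := by positivity
  have c11 : Continuous fun p : ℝ × ℝ => (cos p.1 - cos p.2) ^ 2 := by fun_prop
  have c22 : Continuous fun p : ℝ × ℝ => (cos (2 * p.1) - cos (2 * p.2)) ^ 2 := by fun_prop
  have q11 : 0 < (cos 0 - cos (π / 2)) ^ 2 := by simp
  have q22 : 0 < (cos (2 * 0) - cos (2 * (π / 2))) ^ 2 := by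
    rw [mul_div_cancel₀ π two_ne_zero, cos_pi]
    norm_num
  have n12 : ∀ p, 0 ≤ w12 p := fun p => by
    unfold w12
    positivity
  have q12 : 0 < w12 (0, π / 2) := by simp [w12]
  refine ⟨⟨?_, ?_⟩, ⟨?_, ?_⟩, ⟨?_, ?_⟩⟩
  · intro y _ z hz hyz
    exact mul_lt_mul_of_pos_left
      (weighted_strictMono c11 (fun _ => sq_nonneg _) q11 hz hyz) hc
  · intro z hz
    exact mul_pos hc (weighted_pos c11 (fun _ => sq_nonneg _) q11 hz)
  · intro y hy z hz hyz
    have hy' : y < 0 := hy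
    have hz' : z < 0 := hz
    rw [a12_eq hy', a12_eq hz']
    refine mul_lt_mul_of_pos_left ?_ hc
    have hA : 1 / (4 - y) < 1 / (4 - z) :=
      one_div_lt_one_div_of_lt (by linarith) (by linarith)
    exact mul_lt_mul'' hA (weighted_strictMono continuous_w12 n12 q12 hz' hyz)
      (one_div_pos.2 (by linarith)).le (weighted_pos continuous_w12 n12 q12 hy').le
  · intro z hz
    rw [a12_eq hz]
    exact mul_pos hc (mul_pos (one_div_pos.2 (by linarith))
      (weighted_pos continuous_w12 n12 q12 hz))
  · intro y _ z hz hyz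
    exact mul_lt_mul_of_pos_left
      (weighted_strictMono c22 (fun _ => sq_nonneg _) q22 hz hyz) hc
  · intro z hz
    exact mul_pos hc (weighted_pos c22 (fun _ => sq_nonneg _) q22 hz)
end

section
/- For all real λ and μ, the set {z ∈ ℝ∖[0,8] : Δ_{λμ}(z) = 0} contains at most two points. -/
/-!
`Δ_{λμ}(z) = det (1 + diag(λ, μ) A(z))` with `A = (a_{jk})`, and a null vector `c` of that matrix
gives the eigenfunction `f = (c₁φ₁ + c₂φ₂) / (E₀ - z)` of the rank-two perturbation
`H f = E₀ f + κ (λ ⟨φ₁, f⟩ φ₁ + μ ⟨φ₂, f⟩ φ₂)` of multiplication by `E₀`, where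
`φₙ(p) = cos (n p₁) - cos (n p₂)` and `κ = 1 / (8π²)` (`exists_isEig`).

The bound is then the min-max counting of eigenvalues outside `[0, 8]`. Eigenfunctions with distinct
eigenvalues are orthogonal (`IsEig.orthogonal`), so on the span of eigenfunctions with eigenvalues
below `0` the form `⟨H f, f⟩` is negative definite. On the other hand
`⟨H f, f⟩ = ⟨E₀ f, f⟩ + κλ⟨φ₁, f⟩² + κμ⟨φ₂, f⟩²` is nonnegative as soon as `⟨φₖ, f⟩ = 0` for those `k`
whose coupling is negative. Hence there are at most as many zeros below `0` as negative couplings, and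
likewise at most as many zeros above `8` as positive ones; together at most two. Both sides of the
spectrum are treated at once by `coeff_eq_zero`, with a sign `s = ±1` and the band edge `e = 0` or `8`.
-/

open Real MeasureTheory Filter Topology

/-- The Fredholm determinant `Δ_{λμ}(z) = (1 + λa₁₁(z))(1 + μa₂₂(z)) - λμ a₁₂(z)²`. -/
noncomputable def Det (l m z : ℝ) : ℝ :=
  (1 + l * a11 z) * (1 + m * a22 z) - l * m * (a12 z) ^ 2

/-! ### Form factors and the inner product on the square -/

/-- The form factor `cos (n p₁) - cos (n p₂)`, used for `n = 1, 2`. -/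
noncomputable def phi (n : ℝ) (p : ℝ × ℝ) : ℝ := cos (n * p.1) - cos (n * p.2)

/-- The `L²` inner product on the square `[-π,π]²` (meaningful for continuous functions). -/
noncomputable def ip (f g : ℝ × ℝ → ℝ) : ℝ := ∫ p in box, f p * g p

/-- `f` is a continuous eigenfunction, nonzero in `L²` of the square, of
`f ↦ E₀ f + L ⟨φ₁, f⟩ φ₁ + M ⟨φ₂, f⟩ φ₂` with eigenvalue `z`. The normalization `1 / (8π²)` is
absorbed in the couplings `L` and `M`. -/
structure IsEig (L M z : ℝ) (f : ℝ × ℝ → ℝ) : Prop where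
  cont : Continuous f
  pos : 0 < ip f f
  eqn : ∀ p, E0 p * f p = z * f p - (L * ip (phi 1) f * phi 1 p + M * ip (phi 2) f * phi 2 p)

lemma continuous_phi (n : ℝ) : Continuous (phi n) := by unfold phi; fun_prop

lemma E0_nonneg (p : ℝ × ℝ) : 0 ≤ E0 p := by
  unfold E0; linarith [cos_le_one p.1, cos_le_one p.2]

lemma E0_le (p : ℝ × ℝ) : E0 p ≤ 8 := by
  unfold E0; linarith [neg_one_le_cos p.1, neg_one_le_cos p.2]

lemma ip_comm (f g : ℝ × ℝ → ℝ) : ip f g = ip g f := by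
  simp only [ip, mul_comm]

lemma ip_add_left {f g h : ℝ × ℝ → ℝ} (hf : Continuous f) (hg : Continuous g)
    (hh : Continuous h) : ip (fun p => f p + g p) h = ip f h + ip g h := by
  unfold ip
  rw [← integral_add (integrableOn_box (by fun_prop)) (integrableOn_box (by fun_prop))]
  simp only [add_mul]

lemma ip_smul_left (c : ℝ) (f h : ℝ × ℝ → ℝ) : ip (fun p => c * f p) h = c * ip f h := by
  unfold ip
  rw [← integral_const_mul]
  simp only [mul_assoc]

lemma ip_sum_left {ι : Type*} [Fintype ι] (t : ι → ℝ) {f : ι → ℝ × ℝ → ℝ} {h : ℝ × ℝ → ℝ}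
    (hf : ∀ i, Continuous (f i)) (hh : Continuous h) :
    ip (fun p => ∑ i, t i * f i p) h = ∑ i, t i * ip (f i) h := by
  unfold ip
  simp only [Finset.sum_mul, ← integral_const_mul]
  rw [integral_finsetSum]
  · simp only [mul_assoc]
  · intro i _
    exact integrableOn_box ((continuous_const.mul (hf i)).mul hh)

/-- A continuous function that is null in `L²` of the square is orthogonal to everything. -/
lemma ip_eq_zero_of_self {f : ℝ × ℝ → ℝ} (hf : Continuous f) (h0 : ip f f = 0)
    (g : ℝ × ℝ → ℝ) : ip g f = 0 := by
  unfold ip at *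
  rw [integral_eq_zero_iff_of_nonneg (fun p => mul_self_nonneg (f p))
    (integrableOn_box (hf.mul hf))] at h0
  apply integral_eq_zero_of_ae
  filter_upwards [h0] with p hp
  have : f p = 0 := by simpa using hp
  simp [this]

/-! ### Orthogonality and the min-max step -/

lemma IsEig.ip_E0 {L M z : ℝ} {f g : ℝ × ℝ → ℝ} (hf : IsEig L M z f) (hg : Continuous g) :
    ip (fun p => E0 p * f p) g
      = z * ip f g - (L * ip (phi 1) f * ip (phi 1) g + M * ip (phi 2) f * ip (phi 2) g) := by
  have h1 := continuous_phi 1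
  have h2 := continuous_phi 2
  have hc := hf.cont
  have : (fun p => E0 p * f p) = fun p => z * f p +
      ((-(L * ip (phi 1) f)) * phi 1 p + (-(M * ip (phi 2) f)) * phi 2 p) := by
    funext p; rw [hf.eqn p]; ring
  rw [this, ip_add_left (by fun_prop) (by fun_prop) hg, ip_add_left (by fun_prop) (by fun_prop) hg,
    ip_smul_left, ip_smul_left, ip_smul_left]
  ring

lemma IsEig.orthogonal {L M z w : ℝ} {f g : ℝ × ℝ → ℝ} (hf : IsEig L M z f) (hg : IsEig L M w g)
    (hzw : z ≠ w) : ip f g = 0 := by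
  have h1 := hf.ip_E0 hg.cont
  have h2 := hg.ip_E0 hf.cont
  have h3 : ip (fun p => E0 p * f p) g = ip (fun p => E0 p * g p) f := by
    unfold ip; congr 1; funext p; ring
  rw [ip_comm g f] at h2
  have : (z - w) * ip f g = 0 := by linarith
  exact (mul_eq_zero.mp this).resolve_left (sub_ne_zero.mpr hzw)

/-- The min-max step. Eigenvalues on the side of the band edge `e` away from the spectrum of `E₀`
make `s ⟨(H - e) f, f⟩` negative definite on the span of the eigenfunctions, so a combination on
which the rank-two part has the sign `s` must be trivial. -/
lemma coeff_eq_zero {ι : Type*} [Fintype ι] {L M s e : ℝ}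
    (hE : ∀ p, 0 ≤ s * (E0 p - e)) {z : ι → ℝ} (hz : Function.Injective z)
    (hs : ∀ i, s * (z i - e) < 0) {f : ι → ℝ × ℝ → ℝ} (hf : ∀ i, IsEig L M (z i) (f i))
    (t : ι → ℝ) (hL : 0 ≤ s * L * (∑ i, t i * ip (phi 1) (f i)) ^ 2)
    (hM : 0 ≤ s * M * (∑ i, t i * ip (phi 2) (f i)) ^ 2) : t = 0 := by
  classical
  set F : ℝ × ℝ → ℝ := fun p => ∑ i, t i * f i p with hF
  have hc : ∀ i, Continuous (f i) := fun i => (hf i).cont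
  have hFc : Continuous F := by fun_prop
  have hfF : ∀ i, ip (f i) F = t i * ip (f i) (f i) := by
    intro i
    rw [ip_comm, hF, ip_sum_left t hc (hc i), Finset.sum_eq_single i]
    · intro j _ hj
      rw [(hf j).orthogonal (hf i) (hz.ne hj), mul_zero]
    · simp
  have hphi : ∀ n, ip (phi n) F = ∑ i, t i * ip (phi n) (f i) := by
    intro n
    rw [ip_comm, hF, ip_sum_left t hc (continuous_phi n)]
    simp only [ip_comm]
  have hFF : ip F F = ∑ i, t i * ip (f i) F := ip_sum_left t hc hFc
  have hEF : ip (fun p => E0 p * F p) F = ∑ i, t i * ip (fun p => E0 p * f i p) F := by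
    have hE0 := continuous_E0
    rw [← ip_sum_left (f := fun i p => E0 p * f i p) t (fun i => by fun_prop) hFc]
    congr 1
    funext p
    simp only [hF, Finset.mul_sum]
    exact Finset.sum_congr rfl fun i _ => by ring
  have key : s * (ip (fun p => E0 p * F p) F - e * ip F F)
      = ∑ i, t i ^ 2 * (s * (z i - e) * ip (f i) (f i))
        - s * L * (ip (phi 1) F) ^ 2 - s * M * (ip (phi 2) F) ^ 2 := by
    have e1 : ∀ n : ℝ, ip (phi n) F ^ 2 = ∑ i, t i * ip (phi n) (f i) * ip (phi n) F := by
      intro n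
      rw [← Finset.sum_mul, ← hphi, sq]
    rw [hEF, hFF, e1, e1]
    simp only [Finset.mul_sum, ← Finset.sum_sub_distrib]
    refine Finset.sum_congr rfl fun i _ => ?_
    rw [(hf i).ip_E0 hFc, hfF]
    ring
  have hpos : 0 ≤ s * (ip (fun p => E0 p * F p) F - e * ip F F) := by
    have : s * (ip (fun p => E0 p * F p) F - e * ip F F)
        = ∫ p in box, s * (E0 p - e) * (F p * F p) := by
      rw [← ip_smul_left]
      unfold ip
      have hE0 := continuous_E0
      rw [← integral_sub (integrableOn_box (by fun_prop)) (integrableOn_box (by fun_prop)),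
        ← integral_const_mul]
      congr 1
      funext p
      ring
    rw [this]
    exact integral_nonneg fun p => mul_nonneg (hE p) (mul_self_nonneg _)
  have hneg : ∀ i, s * (z i - e) * ip (f i) (f i) < 0 :=
    fun i => mul_neg_of_neg_of_pos (hs i) (hf i).pos
  have hle : ∀ i ∈ Finset.univ, t i ^ 2 * (s * (z i - e) * ip (f i) (f i)) ≤ 0 :=
    fun i _ => mul_nonpos_of_nonneg_of_nonpos (sq_nonneg _) (hneg i).le
  rw [hphi, hphi] at key
  have hsum : ∑ i, t i ^ 2 * (s * (z i - e) * ip (f i) (f i)) = 0 :=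
    le_antisymm (Finset.sum_nonpos hle) (by linarith)
  funext i
  have := (Finset.sum_eq_zero_iff_of_nonpos hle).mp hsum i (Finset.mem_univ i)
  simpa using (mul_eq_zero.mp this).resolve_right (hneg i).ne

/-! ### Zeros of the determinant are eigenvalues -/

/-- The factor `1 / (8π²)` of the matrix elements `a_{jk}`. -/
noncomputable def kap : ℝ := 1 / (8 * π ^ 2)

lemma kap_pos : 0 < kap := by unfold kap; positivity

/-- Birman–Schwinger: a zero of the determinant outside `[0, 8]` is an eigenvalue. -/
lemma exists_isEig {l m z : ℝ} (hz : z ∉ Set.Icc (0 : ℝ) 8) (h : Det l m z = 0) :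
    ∃ f, IsEig (kap * l) (kap * m) z f := by
  have hne : ∀ p, E0 p - z ≠ 0 := by
    intro p hp
    exact hz ⟨by linarith [E0_nonneg p], by linarith [E0_le p]⟩
  obtain ⟨c, hc0, hc⟩ := (Matrix.exists_mulVec_eq_zero_iff
    (M := !![1 + l * a11 z, l * a12 z; m * a12 z, 1 + m * a22 z])).mpr (by
      rw [Matrix.det_fin_two_of, ← h]; unfold Det; ring)
  have hc1 := congrFun hc 0
  have hc2 := congrFun hc 1
  simp [Matrix.mulVec, dotProduct, Fin.sum_univ_two] at hc1 hc2
  have hE := continuous_E0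
  have h1 := continuous_phi 1
  have h2 := continuous_phi 2
  let u : ℝ → ℝ × ℝ → ℝ := fun n p => phi n p / (E0 p - z)
  have hu : ∀ n, Continuous (u n) := fun n =>
    (continuous_phi n).div (by fun_prop) hne
  set f : ℝ × ℝ → ℝ := fun p => c 0 * u 1 p + c 1 * u 2 p with hfdef
  have hu1 := hu 1
  have hu2 := hu 2
  have hfc : Continuous f := by fun_prop
  have hip : ∀ n, ip (phi n) f = c 0 * ip (phi n) (u 1) + c 1 * ip (phi n) (u 2) := by
    intro n
    rw [ip_comm, hfdef, ip_add_left (by fun_prop) (by fun_prop) (continuous_phi n),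
      ip_smul_left, ip_smul_left, ip_comm (u 1), ip_comm (u 2)]
  have h11 : a11 z = kap * ip (phi 1) (u 1) := by
    unfold a11 kap ip
    congr 2; funext p; simp only [u, phi, one_mul]; ring
  have h12 : a12 z = kap * ip (phi 1) (u 2) := by
    unfold a12 kap ip
    congr 2; funext p; simp only [u, phi, one_mul]; ring
  have h21 : a12 z = kap * ip (phi 2) (u 1) := by
    unfold a12 kap ip
    congr 2; funext p; simp only [u, phi, one_mul]; ring
  have h22 : a22 z = kap * ip (phi 2) (u 2) := by
    unfold a22 kap ip
    congr 2; funext p; simp only [u, phi]; ring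
  have e1 : c 0 = -(kap * l * ip (phi 1) f) := by
    rw [hip]; rw [h11, h12] at hc1; linarith
  have e2 : c 1 = -(kap * m * ip (phi 2) f) := by
    rw [hip]; rw [h21, h22] at hc2; linarith
  refine ⟨f, hfc, ?_, ?_⟩
  · have hnn : 0 ≤ ip f f := integral_nonneg fun p => mul_self_nonneg (f p)
    refine lt_of_le_of_ne hnn fun h0 => hc0 ?_
    have hz := ip_eq_zero_of_self hfc h0.symm
    rw [hz] at e1 e2
    funext i
    fin_cases i
    · simpa using e1
    · simpa using e2
  · intro p
    have : (E0 p - z) * f p = c 0 * phi 1 p + c 1 * phi 2 p := by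
      simp only [hfdef, u]
      field_simp [hne p]
    rw [e1, e2] at this
    linarith

/-! ### Counting zeros on each side of the spectrum -/

lemma exists_relation {n k : ℕ} (hkn : k < n) (v : Fin n → Fin k → ℝ) :
    ∃ t : Fin n → ℝ, t ≠ 0 ∧ ∀ j, ∑ i, t i * v i j = 0 := by
  have hdep : ¬ LinearIndependent ℝ v := fun h => by
    have := h.fintype_card_le_finrank
    simp at this
    omega
  obtain ⟨t, ht, i, hi⟩ := Fintype.not_linearIndependent_iff.mp hdep
  refine ⟨t, fun h => hi (by simp [h]), fun j => ?_⟩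
  simpa using congrFun ht j

/-- The zeros of the determinant on one side of the band edge `e`: with `(s, e) = (1, 0)` those
below `0`, with `(s, e) = (-1, 8)` those above `8`. -/
def zerosAt (l m s e : ℝ) : Set ℝ :=
  {z | z ∉ Set.Icc (0 : ℝ) 8 ∧ s * (z - e) < 0 ∧ Det l m z = 0}

section Counting

variable {l m s e : ℝ}

lemma zerosAt_eq_empty (hE : ∀ p, 0 ≤ s * (E0 p - e)) (hl : 0 ≤ s * l) (hm : 0 ≤ s * m) :
    zerosAt l m s e = ∅ := by
  refine Set.eq_empty_of_forall_notMem fun z ⟨hz, hs, hd⟩ => ?_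
  obtain ⟨f, hf⟩ := exists_isEig hz hd
  have h := coeff_eq_zero (ι := Unit) hE (z := fun _ => z) (fun _ _ _ => rfl) (fun _ => hs)
    (f := fun _ => f) (fun _ => hf) (fun _ => 1)
    (mul_nonneg (by nlinarith [kap_pos, mul_nonneg kap_pos.le hl]) (sq_nonneg _))
    (mul_nonneg (by nlinarith [kap_pos, mul_nonneg kap_pos.le hm]) (sq_nonneg _))
  simpa using congrFun h ()

lemma zerosAt_subsingleton (hE : ∀ p, 0 ≤ s * (E0 p - e)) (h : 0 ≤ s * l ∨ 0 ≤ s * m) :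
    (zerosAt l m s e).Subsingleton := by
  rintro z ⟨hz, hzs, hzd⟩ w ⟨hw, hws, hwd⟩
  by_contra hne
  obtain ⟨f, hf⟩ := exists_isEig hz hzd
  obtain ⟨g, hg⟩ := exists_isEig hw hwd
  have hinj : Function.Injective ![z, w] := by
    intro i j; fin_cases i <;> fin_cases j <;> simp [hne, Ne.symm hne]
  have hs : ∀ i : Fin 2, s * (![z, w] i - e) < 0 := by intro i; fin_cases i <;> simpa
  have hfg : ∀ i : Fin 2, IsEig (kap * l) (kap * m) (![z, w] i) (![f, g] i) := by
    intro i; fin_cases i <;> simpa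
  rcases h with h | h
  · obtain ⟨t, ht, ht'⟩ := exists_relation one_lt_two
      (fun i (_ : Fin 1) => ip (phi 2) (![f, g] i))
    refine ht (coeff_eq_zero (ι := Fin 2) hE hinj hs hfg t ?_ ?_)
    · exact mul_nonneg (by nlinarith [mul_nonneg kap_pos.le h]) (sq_nonneg _)
    · rw [ht' 0]; simp
  · obtain ⟨t, ht, ht'⟩ := exists_relation one_lt_two
      (fun i (_ : Fin 1) => ip (phi 1) (![f, g] i))
    refine ht (coeff_eq_zero (ι := Fin 2) hE hinj hs hfg t ?_ ?_)
    · rw [ht' 0]; simp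
    · exact mul_nonneg (by nlinarith [mul_nonneg kap_pos.le h]) (sq_nonneg _)

lemma zerosAt_not_three (hE : ∀ p, 0 ≤ s * (E0 p - e)) {x y z : ℝ} (hx : x ∈ zerosAt l m s e)
    (hy : y ∈ zerosAt l m s e) (hz : z ∈ zerosAt l m s e) (hxy : x ≠ y) (hxz : x ≠ z)
    (hyz : y ≠ z) : False := by
  obtain ⟨f, hf⟩ := exists_isEig hx.1 hx.2.2
  obtain ⟨g, hg⟩ := exists_isEig hy.1 hy.2.2
  obtain ⟨k, hk⟩ := exists_isEig hz.1 hz.2.2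
  have hinj : Function.Injective ![x, y, z] := by
    intro i j
    fin_cases i <;> fin_cases j <;> simp [hxy, hxz, hyz, hxy.symm, hxz.symm, hyz.symm]
  have hs : ∀ i : Fin 3, s * (![x, y, z] i - e) < 0 := by
    intro i
    fin_cases i
    exacts [hx.2.1, hy.2.1, hz.2.1]
  have hfg : ∀ i : Fin 3, IsEig (kap * l) (kap * m) (![x, y, z] i) (![f, g, k] i) := by
    intro i
    fin_cases i
    exacts [hf, hg, hk]
  obtain ⟨t, ht, ht'⟩ := exists_relation (show 2 < 3 by norm_num)
    (fun i (j : Fin 2) => ip (phi (![1, 2] j)) (![f, g, k] i))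
  have r1 := ht' 0
  have r2 := ht' 1
  simp only [Matrix.cons_val_zero, Matrix.cons_val_one] at r1 r2
  refine ht (coeff_eq_zero (ι := Fin 3) hE hinj hs hfg t ?_ ?_)
  · rw [r1]; simp
  · rw [r2]; simp

end Counting

lemma exists_subset_pair {S : Set ℝ}
    (h : ∀ x ∈ S, ∀ y ∈ S, ∀ z ∈ S, x ≠ y → x ≠ z → y ≠ z → False) :
    ∃ a b : ℝ, S ⊆ {a, b} := by
  by_cases hS : S.Subsingleton
  · rcases hS.eq_empty_or_singleton with h0 | ⟨a, ha⟩
    · exact ⟨0, 0, by simp [h0]⟩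
    · exact ⟨a, a, by simp [ha]⟩
  · obtain ⟨a, ha, b, hb, hab⟩ := Set.not_subsingleton_iff.mp hS
    refine ⟨a, b, fun z hz => ?_⟩
    by_contra hzab
    simp only [Set.mem_insert_iff, Set.mem_singleton_iff, not_or] at hzab
    exact h a ha b hb z hz hab (Ne.symm hzab.1) (Ne.symm hzab.2)

/-- The set of zeros of `Δ_{λμ}` in `ℝ ∖ [0,8]` contains at most two points. -/
theorem det_zeros_at_most_two (l m : ℝ) :
    ∃ a b : ℝ, {z : ℝ | z ∉ Set.Icc (0 : ℝ) 8 ∧ Det l m z = 0} ⊆ {a, b} := by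
  have hE1 : ∀ p, 0 ≤ (1 : ℝ) * (E0 p - 0) := fun p => by linarith [E0_nonneg p]
  have hE2 : ∀ p, 0 ≤ (-1 : ℝ) * (E0 p - 8) := fun p => by linarith [E0_le p]
  have hsplit : ∀ z ∈ {z : ℝ | z ∉ Set.Icc (0 : ℝ) 8 ∧ Det l m z = 0},
      z ∈ zerosAt l m 1 0 ∨ z ∈ zerosAt l m (-1) 8 := by
    rintro z ⟨hz, hd⟩
    by_cases h0 : z < 0
    · exact Or.inl ⟨hz, by linarith, hd⟩
    · refine Or.inr ⟨hz, ?_, hd⟩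
      by_contra h8
      exact hz ⟨by linarith, by linarith⟩
  apply exists_subset_pair
  intro x hx y hy z hz hxy hxz hyz
  have hx := hsplit x hx
  have hy := hsplit y hy
  have hz := hsplit z hz
  by_cases hpos : 0 ≤ l ∧ 0 ≤ m
  · rw [zerosAt_eq_empty hE1 (by linarith [hpos.1]) (by linarith [hpos.2])] at hx hy hz
    simp only [Set.mem_empty_iff_false, false_or] at hx hy hz
    exact zerosAt_not_three hE2 hx hy hz hxy hxz hyz
  by_cases hneg : l ≤ 0 ∧ m ≤ 0
  · rw [zerosAt_eq_empty hE2 (by linarith [hneg.1]) (by linarith [hneg.2])] at hx hy hz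
    simp only [Set.mem_empty_iff_false, or_false] at hx hy hz
    exact zerosAt_not_three hE1 hx hy hz hxy hxz hyz
  -- The couplings have opposite signs: each side holds at most one zero, so two of three coincide.
  have s1 : (zerosAt l m 1 0).Subsingleton := zerosAt_subsingleton hE1 (by
    by_contra! hh
    exact hneg ⟨by linarith [hh.1], by linarith [hh.2]⟩)
  have s2 : (zerosAt l m (-1) 8).Subsingleton := zerosAt_subsingleton hE2 (by
    by_contra! hh
    exact hpos ⟨by linarith [hh.1], by linarith [hh.2]⟩)
  rcases hx with hx | hx <;> rcases hy with hy | hy <;> rcases hz with hz | hz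
  exacts [hxy (s1 hx hy), hxy (s1 hx hy), hxz (s1 hx hz), hyz (s2 hy hz),
    hyz (s1 hy hz), hxz (s2 hx hz), hxy (s2 hx hy), hxy (s2 hx hy)]
end

section
/- For all real λ and μ and every z ∈ ℝ∖[0,8]: z is an eigenvalue of the operator H^a_{λμ} if and only if Δ_{λμ}(z) = 0. -/
/-!
For `z ∉ [0,8]` the continuous function `E₀ - z` never vanishes, so an eigenfunction must be
`f = -(l c A u + m c B v) / (E₀ - z)`, where `u`, `v` are the two profiles
`cos p₁ - cos p₂`, `cos 2p₁ - cos 2p₂`, `c = 1/(8π²)`, `A = ∫ u f` and `B = ∫ v f`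
(`ansatz` below).  Integrating this identity against `u` and `v` (`integral_mul_ansatz`) gives
`(1 + l a₁₁) A + m a₁₂ B = 0` and `l a₁₂ A + (1 + m a₂₂) B = 0`, a linear system whose determinant
is `Det l m z`.  If `A = B = 0` then `f = 0`, so an eigenfunction yields a nontrivial solution and
the determinant vanishes.  Conversely a nontrivial solution `(A, B)` defines, through the ansatz, a
continuous (hence `L²`) function whose moments are again `A` and `B`; it is therefore nonzero and
solves the eigenvalue equation.
-/

open Real MeasureTheory Filter Topology

/-- Lebesgue measure restricted to the square `[-π,π]²`. -/
noncomputable def μbox : Measure (ℝ × ℝ) := volume.restrict box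

/-- `z` is an eigenvalue of the operator `H^a_{λμ}` on `L²([-π,π]²)`, i.e.
`H^a_{λμ} f = z f` for some nonzero `f ∈ L²`. -/
def IsEigA (l m z : ℝ) : Prop :=
  ∃ f : Lp ℂ 2 μbox, f ≠ 0 ∧
    ∀ᵐ p ∂μbox,
      ((E0 p : ℝ) : ℂ) * f p
        + ((l / (8 * π ^ 2) : ℝ) : ℂ) * ((cos p.1 - cos p.2 : ℝ) : ℂ) *
            (∫ q, ((cos q.1 - cos q.2 : ℝ) : ℂ) * f q ∂μbox)
        + ((m / (8 * π ^ 2) : ℝ) : ℂ) * ((cos (2 * p.1) - cos (2 * p.2) : ℝ) : ℂ) *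
            (∫ q, ((cos (2 * q.1) - cos (2 * q.2) : ℝ) : ℂ) * f q ∂μbox)
      = (z : ℂ) * f p

lemma E0_sub_ne_zero {z : ℝ} (hz : z ∉ Set.Icc (0 : ℝ) 8) (p : ℝ × ℝ) : E0 p - z ≠ 0 := by
  intro h
  apply hz
  have h1 := cos_le_one p.1
  have h2 := cos_le_one p.2
  have h3 := neg_one_le_cos p.1
  have h4 := neg_one_le_cos p.2
  unfold E0 at h
  constructor <;> linarith

lemma isCompact_box : IsCompact box := isCompact_Icc

instance isFiniteMeasure_μbox : IsFiniteMeasure μbox :=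
  ⟨by simpa [μbox] using isCompact_box.measure_lt_top⟩

lemma memLp_of_continuous {g : ℝ × ℝ → ℂ} (hg : Continuous g) : MemLp g 2 μbox := by
  obtain ⟨C, hC⟩ := isCompact_box.exists_bound_of_continuousOn hg.continuousOn
  refine MemLp.of_bound hg.aestronglyMeasurable C ?_
  exact ae_restrict_of_forall_mem isCompact_box.measurableSet hC

lemma integrable_of_continuous {g : ℝ × ℝ → ℂ} (hg : Continuous g) : Integrable g μbox :=
  (memLp_of_continuous hg).integrable (by norm_num)

/-- The profile `cos p₁ - cos p₂` of the first rank-one perturbation. -/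
noncomputable def uProf (p : ℝ × ℝ) : ℝ := cos p.1 - cos p.2

/-- The profile `cos 2p₁ - cos 2p₂` of the second rank-one perturbation. -/
noncomputable def vProf (p : ℝ × ℝ) : ℝ := cos (2 * p.1) - cos (2 * p.2)

lemma continuous_uProf : Continuous uProf := by
  unfold uProf
  fun_prop

lemma continuous_vProf : Continuous vProf := by
  unfold vProf
  fun_prop

/-- The form every eigenfunction with moments `A = ∫ u f`, `B = ∫ v f` must have. -/
noncomputable def ansatz (l m z : ℝ) (A B : ℂ) (p : ℝ × ℝ) : ℂ :=
  -(((l / (8 * π ^ 2) : ℝ) : ℂ) * (uProf p : ℂ) * A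
      + ((m / (8 * π ^ 2) : ℝ) : ℂ) * (vProf p : ℂ) * B) / ((E0 p - z : ℝ) : ℂ)

lemma continuous_ansatz {z : ℝ} (hz : z ∉ Set.Icc (0 : ℝ) 8) (l m : ℝ) (A B : ℂ) :
    Continuous (ansatz l m z A B) := by
  have hu := continuous_uProf
  have hv := continuous_vProf
  have hE := continuous_E0
  unfold ansatz
  refine Continuous.div (by fun_prop) (by fun_prop) fun p => ?_
  exact_mod_cast E0_sub_ne_zero hz p

/-- The moment of the ansatz against a continuous real weight `w`. -/
lemma integral_mul_ansatz {z : ℝ} (hz : z ∉ Set.Icc (0 : ℝ) 8) (l m : ℝ) (A B : ℂ)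
    {w : ℝ × ℝ → ℝ} (hw : Continuous w) :
    ∫ q, (w q : ℂ) * ansatz l m z A B q ∂μbox =
      -((l * (1 / (8 * π ^ 2) * ∫ q, w q * uProf q / (E0 q - z) ∂μbox : ℝ) : ℂ) * A
        + (m * (1 / (8 * π ^ 2) * ∫ q, w q * vProf q / (E0 q - z) ∂μbox : ℝ) : ℂ) * B) := by
  have hD := E0_sub_ne_zero hz
  have hE := continuous_E0
  have key : ∀ {g : ℝ × ℝ → ℝ}, Continuous g →
      Integrable (fun q => ((w q * g q / (E0 q - z) : ℝ) : ℂ)) μbox := fun {g} hg =>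
    integrable_of_continuous
      (Complex.continuous_ofReal.comp ((hw.mul hg).div (by fun_prop) hD))
  have h : ∀ q, (w q : ℂ) * ansatz l m z A B q =
      (-((l / (8 * π ^ 2) : ℝ) : ℂ) * A) * ((w q * uProf q / (E0 q - z) : ℝ) : ℂ)
      + (-((m / (8 * π ^ 2) : ℝ) : ℂ) * B) * ((w q * vProf q / (E0 q - z) : ℝ) : ℂ) := by
    intro q
    simp only [ansatz, Complex.ofReal_div, Complex.ofReal_mul]
    ring
  simp_rw [h]
  rw [integral_add ((key continuous_uProf).const_mul _) ((key continuous_vProf).const_mul _),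
    integral_const_mul, integral_const_mul, integral_complex_ofReal, integral_complex_ofReal]
  push_cast
  ring

lemma integral_uProf_mul_ansatz {z : ℝ} (hz : z ∉ Set.Icc (0 : ℝ) 8) (l m : ℝ) (A B : ℂ) :
    ∫ q, (uProf q : ℂ) * ansatz l m z A B q ∂μbox =
      -((l : ℂ) * (a11 z : ℂ) * A + (m : ℂ) * (a12 z : ℂ) * B) := by
  rw [integral_mul_ansatz hz l m A B continuous_uProf]
  simp only [a11, a12, uProf, vProf, μbox, pow_two, Complex.ofReal_mul]

lemma integral_vProf_mul_ansatz {z : ℝ} (hz : z ∉ Set.Icc (0 : ℝ) 8) (l m : ℝ) (A B : ℂ) :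
    ∫ q, (vProf q : ℂ) * ansatz l m z A B q ∂μbox =
      -((l : ℂ) * (a12 z : ℂ) * A + (m : ℂ) * (a22 z : ℂ) * B) := by
  rw [integral_mul_ansatz hz l m A B continuous_vProf]
  simp only [a12, a22, uProf, vProf, μbox, pow_two, Complex.ofReal_mul,
    mul_comm (cos (2 * _) - cos (2 * _)) (cos _ - cos _)]

/-- Pointwise, the eigenvalue equation with prescribed moments says that `f` is the ansatz. -/
lemma eq_ansatz_iff {z : ℝ} (hz : z ∉ Set.Icc (0 : ℝ) 8) (l m : ℝ) (A B y : ℂ) (p : ℝ × ℝ) :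
    ((E0 p : ℝ) : ℂ) * y + ((l / (8 * π ^ 2) : ℝ) : ℂ) * (uProf p : ℂ) * A
        + ((m / (8 * π ^ 2) : ℝ) : ℂ) * (vProf p : ℂ) * B = (z : ℂ) * y
      ↔ y = ansatz l m z A B p := by
  have hD : ((E0 p - z : ℝ) : ℂ) ≠ 0 := by exact_mod_cast E0_sub_ne_zero hz p
  rw [ansatz, eq_div_iff hD, Complex.ofReal_sub]
  constructor <;> intro h <;> linear_combination h

/-- The vanishing of the determinant is the solvability of the homogeneous moment system. -/
lemma det_eq_zero_iff (l m z : ℝ) :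
    Det l m z = 0 ↔ ∃ A B : ℂ, ¬ (A = 0 ∧ B = 0) ∧
      A = -((l : ℂ) * (a11 z : ℂ) * A + (m : ℂ) * (a12 z : ℂ) * B) ∧
      B = -((l : ℂ) * (a12 z : ℂ) * A + (m : ℂ) * (a22 z : ℂ) * B) := by
  have hdet : (!![1 + (l : ℂ) * a11 z, (m : ℂ) * a12 z;
      (l : ℂ) * a12 z, 1 + (m : ℂ) * a22 z]).det = ((Det l m z : ℝ) : ℂ) := by
    rw [Matrix.det_fin_two_of, Det]
    push_cast
    ring
  rw [← Complex.ofReal_eq_zero, ← hdet, ← Matrix.exists_mulVec_eq_zero_iff]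
  constructor
  · rintro ⟨x, hx, h⟩
    have h0 := congrFun h 0
    have h1 := congrFun h 1
    simp [Matrix.mulVec, dotProduct, Fin.sum_univ_two] at h0 h1
    refine ⟨x 0, x 1, ?_, by linear_combination h0, by linear_combination h1⟩
    rintro ⟨e0, e1⟩
    exact hx (by ext i; fin_cases i <;> simp [e0, e1])
  · rintro ⟨A, B, hne, hA, hB⟩
    refine ⟨![A, B], fun h => hne ⟨congrFun h 0, congrFun h 1⟩, ?_⟩
    ext i
    fin_cases i
    · simp [Matrix.mulVec, dotProduct, Fin.sum_univ_two]
      linear_combination hA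
    · simp [Matrix.mulVec, dotProduct, Fin.sum_univ_two]
      linear_combination hB

/-- For `z ∈ ℝ ∖ [0,8]`, `z` is an eigenvalue of `H^a_{λμ}` iff `Δ_{λμ}(z) = 0`. -/
theorem isEigA_iff_det_eq_zero (l m z : ℝ) (hz : z ∉ Set.Icc (0 : ℝ) 8) :
    IsEigA l m z ↔ Det l m z = 0 := by
  rw [det_eq_zero_iff]
  constructor
  · rintro ⟨f, hf, h⟩
    set A : ℂ := ∫ q, (uProf q : ℂ) * f q ∂μbox with hA
    set B : ℂ := ∫ q, (vProf q : ℂ) * f q ∂μbox with hB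
    have hfa : ∀ᵐ p ∂μbox, f p = ansatz l m z A B p := by
      filter_upwards [h] with p hp
      exact (eq_ansatz_iff hz l m A B (f p) p).1 hp
    refine ⟨A, B, ?_, ?_, ?_⟩
    · rintro ⟨hA0, hB0⟩
      refine hf ((Lp.eq_zero_iff_ae_eq_zero).2 ?_)
      filter_upwards [hfa] with p hp
      simp [hp, ansatz, hA0, hB0]
    · refine Eq.trans (integral_congr_ae ?_) (integral_uProf_mul_ansatz hz l m A B)
      filter_upwards [hfa] with p hp
      rw [hp]
    · refine Eq.trans (integral_congr_ae ?_) (integral_vProf_mul_ansatz hz l m A B)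
      filter_upwards [hfa] with p hp
      rw [hp]
  · rintro ⟨A, B, hne, hA, hB⟩
    have hmem := memLp_of_continuous (continuous_ansatz hz l m A B)
    set f : Lp ℂ 2 μbox := hmem.toLp _
    have hfa : ∀ᵐ p ∂μbox, f p = ansatz l m z A B p := hmem.coeFn_toLp
    have hfA : ∫ q, (uProf q : ℂ) * f q ∂μbox = A := by
      refine Eq.trans (integral_congr_ae ?_)
        ((integral_uProf_mul_ansatz hz l m A B).trans hA.symm)
      filter_upwards [hfa] with p hp
      rw [hp]
    have hfB : ∫ q, (vProf q : ℂ) * f q ∂μbox = B := by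
      refine Eq.trans (integral_congr_ae ?_)
        ((integral_vProf_mul_ansatz hz l m A B).trans hB.symm)
      filter_upwards [hfa] with p hp
      rw [hp]
    refine ⟨f, fun h0 => hne ?_, ?_⟩
    -- If `f = 0`, both of its moments vanish, contradicting `(A, B) ≠ 0`.
    · have h0' := (Lp.eq_zero_iff_ae_eq_zero).1 h0
      rw [← hfA, ← hfB]
      constructor
      · refine integral_eq_zero_of_ae ?_
        filter_upwards [h0'] with p hp
        simp [hp]
      · refine integral_eq_zero_of_ae ?_
        filter_upwards [h0'] with p hp
        simp [hp]
    · filter_upwards [hfa] with p hp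
      have := (eq_ansatz_iff hz l m A B (f p) p).2 hp
      rw [← hfA, ← hfB] at this
      exact this
end
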